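/- arXiv:2303.03327 — 2 statements merged into one kernel-verified Lean document; each statement's English description precedes it below -/
import Mathlib

section
/- Regret lower bound for the Example (Proposition 2, second part). Assume 180·T ≤ exp(d/8), K ≤ 20T, K ≥ 6000/γ², and T ≥ 144. Then for any algorithm {p_t}_{t=1}^T there exists a model M ∈ M̃ such that, with probability at least 1/3 over the randomness of the algorithm and the variance-1 Gaussian reward noise under ground truth M, Reg_γ(T) := Σ_{t=1}^T (γ·max_{(π',π)∈Π} f_M(π',π) − f_M(π'_t,π_t)) ≥ (γ/10)·√(K·T). -/
open MeasureTheory ProbabilityTheory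
open scoped ENNReal NNReal

noncomputable section

def sgn (b : Bool) : ℝ := if b then 1 else -1

/-- Inner product of two sign vectors in `{−1,1}^d`, encoded by `Fin d → Bool`. -/
def ip {d : ℕ} (w x : Fin d → Bool) : ℝ := ∑ i, sgn (w i) * sgn (x i)

/-- The action set `({−1,1}^d ∪ {⊥}) × [K]`; `none` plays the role of `⊥`. -/
abbrev ExAct (d K : ℕ) := Option (Fin d → Bool) × Fin K

instance (d K : ℕ) : MeasurableSpace (ExAct d K) := ⊤

/-- `h_w(π') = (2/d)·max(0, ⟨π',w⟩ − d/2)` with `h_w(⊥) = 0`. -/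
def hfun {d : ℕ} (w : Fin d → Bool) : Option (Fin d → Bool) → ℝ
  | none => 0
  | some x => (2 / (d:ℝ)) * max 0 (ip x w - d/2)

/-- Mean reward of the model `(w,k)` of the subclass `M̃`: `v_k = 1` and
`v_j = 1 − √(K/(20T))` for `j ≠ k`. -/
def fEx (d K T : ℕ) (γ : ℝ) (w : Fin d → Bool) (k : Fin K) : ExAct d K → ℝ :=
  fun a => (1 - γ) * hfun w a.1 +
    γ * (if a.2 = k then 1 else 1 - Real.sqrt ((K:ℝ) / (20 * (T:ℝ))))

/-- Trajectory law of a bandit algorithm with Gaussian variance-1 reward noise. -/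
def trajMeasure {P : Type*} [MeasurableSpace P] (f : P → ℝ)
    (alg : (t : ℕ) → Kernel (Fin t → P × ℝ) P) :
    (n : ℕ) → Measure (Fin n → P × ℝ)
  | 0 => Measure.dirac (fun i : Fin 0 => i.elim0)
  | (n+1) => (trajMeasure f alg n).bind fun h =>
      (alg n h).bind fun a =>
        (gaussianReal (f a) 1).map fun r => Fin.snoc h (a, r)

/-!
Compare a model `(w, k)` with the reference model in which every action has mean reward
`γ (1 - √(K/(20T)))`. A fixed action is revealing for at most a fraction `exp (-d/8)` of the sign
vectors `w` (Hoeffding), so averaging over `(w, k)` and Markov's inequality give a model for which,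
under the reference law, with probability at least `13/20` no action reveals `w` and the arm `k` is
played fewer than `4T/K` times. On that event the regret is at least `γ √(KT) / 10`, and it only
remains to transfer the event from the reference law to the law of `(w, k)`.

The transfer reflects the model `f` about the reference `g`: on an event where
`∑ (f - g)² ≤ c`, the log-likelihood ratios `L`, `L'` of `f` and of `2g - f` against `g` satisfy
`L + L' = -∑ (f - g)² ≥ -c`, since the noise terms cancel. AM-GM then gives
`1 ≤ e^L + (e^c / 4) e^L'` pointwise, and integrating against the law of `g` shows that the event
loses at most `e^c / 4` in probability. Here `c = 1/5` and `13/20 - e^(1/5) / 4 ≥ 1/3`.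
-/

section TrajectoryLaw

variable {P : Type*} [MeasurableSpace P] {n : ℕ} {f : P → ℝ}

/-- The reward kernel `a ↦ N(f a, 1)`. -/
def rewardKernel (f : P → ℝ) (hf : Measurable f) : Kernel P ℝ where
  toFun a := gaussianReal (f a) 1
  measurable' := measurable_gaussianReal.comp (hf.prodMk measurable_const)

instance (hf : Measurable f) : IsMarkovKernel (rewardKernel f hf) :=
  ⟨fun a => inferInstanceAs (IsProbabilityMeasure (gaussianReal (f a) 1))⟩

lemma measurable_snoc {α : Type*} [MeasurableSpace α] :
    Measurable fun p : (Fin n → α) × α => (Fin.snoc p.1 p.2 : Fin (n + 1) → α) := by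
  refine measurable_pi_iff.mpr fun i => ?_
  cases i using Fin.lastCases with
  | last => simp only [Fin.snoc_last]; fun_prop
  | cast j => simp only [Fin.snoc_castSucc]; fun_prop

/-- One round of interaction as a kernel from histories to histories: the policy `κ` draws an
action and the reward kernel a reward, and both are appended. -/
def roundKernel (f : P → ℝ) (hf : Measurable f) (κ : Kernel (Fin n → P × ℝ) P) :
    Kernel (Fin n → P × ℝ) (Fin (n + 1) → P × ℝ) :=
  (Kernel.id ×ₖ (κ ⊗ₖ Kernel.prodMkLeft _ (rewardKernel f hf))).map fun p => Fin.snoc p.1 p.2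

instance (hf : Measurable f) (κ : Kernel (Fin n → P × ℝ) P) [IsMarkovKernel κ] :
    IsMarkovKernel (roundKernel f hf κ) :=
  Kernel.IsMarkovKernel.map _ measurable_snoc

lemma lintegral_roundKernel (hf : Measurable f) (κ : Kernel (Fin n → P × ℝ) P)
    [IsSFiniteKernel κ] (h : Fin n → P × ℝ) {F : (Fin (n + 1) → P × ℝ) → ℝ≥0∞}
    (hF : Measurable F) :
    ∫⁻ ω, F ω ∂roundKernel f hf κ h
      = ∫⁻ a, ∫⁻ r, F (Fin.snoc h (a, r)) ∂gaussianReal (f a) 1 ∂κ h := by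
  have hFs : Measurable fun p : (Fin n → P × ℝ) × (P × ℝ) => F (Fin.snoc p.1 p.2) :=
    hF.comp measurable_snoc
  rw [roundKernel, Kernel.lintegral_map _ measurable_snoc _ hF, Kernel.lintegral_id_prod hFs]
  exact Kernel.lintegral_compProd _ _ _ (hFs.comp measurable_prodMk_left)

lemma roundKernel_apply (hf : Measurable f) (κ : Kernel (Fin n → P × ℝ) P) [IsSFiniteKernel κ]
    (h : Fin n → P × ℝ) :
    roundKernel f hf κ h = (κ h).bind fun a =>
      (gaussianReal (f a) 1).map fun r => (Fin.snoc h (a, r) : Fin (n + 1) → P × ℝ) := by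
  have hround (a : P) : Measurable fun r : ℝ => (Fin.snoc h (a, r) : Fin (n + 1) → P × ℝ) :=
    measurable_snoc.comp (measurable_prodMk_left.comp measurable_prodMk_left)
  have hlaw : Measurable fun a => (gaussianReal (f a) 1).map fun r =>
      (Fin.snoc h (a, r) : Fin (n + 1) → P × ℝ) := by
    refine Measure.measurable_of_measurable_coe _ fun s hs => ?_
    simp_rw [Measure.map_apply (hround _) hs]
    exact Kernel.measurable_kernel_prodMk_left (κ := rewardKernel f hf)
      (measurable_snoc.comp measurable_prodMk_left hs)
  refine Measure.ext_of_lintegral _ fun F hF => ?_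
  rw [lintegral_roundKernel hf κ h hF, Measure.lintegral_bind hlaw.aemeasurable hF.aemeasurable]
  exact lintegral_congr fun a => (lintegral_map hF (hround a)).symm

variable (alg : (t : ℕ) → Kernel (Fin t → P × ℝ) P)

lemma trajMeasure_succ [∀ t, IsSFiniteKernel (alg t)] (hf : Measurable f) (n : ℕ) :
    trajMeasure f alg (n + 1) = roundKernel f hf (alg n) ∘ₘ trajMeasure f alg n := by
  rw [trajMeasure]
  congr 1
  exact funext fun h => (roundKernel_apply hf (alg n) h).symm

lemma isProbabilityMeasure_trajMeasure [∀ t, IsMarkovKernel (alg t)] (hf : Measurable f)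
    (n : ℕ) : IsProbabilityMeasure (trajMeasure f alg n) := by
  induction n with
  | zero => exact Measure.dirac.isProbabilityMeasure
  | succ n ih => rw [trajMeasure_succ alg hf]; infer_instance

lemma lintegral_trajMeasure_succ [∀ t, IsSFiniteKernel (alg t)] (hf : Measurable f) (n : ℕ)
    {F : (Fin (n + 1) → P × ℝ) → ℝ≥0∞} (hF : Measurable F) :
    ∫⁻ ω, F ω ∂trajMeasure f alg (n + 1) =
      ∫⁻ h, ∫⁻ a, ∫⁻ r, F (Fin.snoc h (a, r)) ∂gaussianReal (f a) 1 ∂alg n h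
        ∂trajMeasure f alg n := by
  rw [trajMeasure_succ alg hf, Measure.lintegral_bind (Kernel.aemeasurable _) hF.aemeasurable]
  exact lintegral_congr fun h => lintegral_roundKernel hf (alg n) h hF

end TrajectoryLaw

section ChangeOfMeasure

lemma gaussianReal_eq_withDensity (μ ν : ℝ) {v : ℝ≥0} (hv : v ≠ 0) :
    gaussianReal μ v = (gaussianReal ν v).withDensity fun r =>
      ENNReal.ofReal (Real.exp (((μ - ν) * (r - ν) - (μ - ν) ^ 2 / 2) / v)) := by
  rw [gaussianReal_of_var_ne_zero _ hv, gaussianReal_of_var_ne_zero _ hv,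
    ← withDensity_mul _ (measurable_gaussianPDF _ _) (by fun_prop)]
  congr 1 with r
  rw [Pi.mul_apply, gaussianPDF, gaussianPDF, ← ENNReal.ofReal_mul (gaussianPDFReal_nonneg _ _ _),
    gaussianPDFReal, gaussianPDFReal, mul_assoc _ (Real.exp _) (Real.exp _), ← Real.exp_add]
  congr 3
  have hv' : (v : ℝ) ≠ 0 := NNReal.coe_ne_zero.mpr hv
  field_simp
  ring

variable {P : Type*} {n : ℕ}

/-- The log-likelihood ratio of mean rewards `f` against `g` along a history, for variance-one
Gaussian noise. -/
def histLLR (f g : P → ℝ) (ω : Fin n → P × ℝ) : ℝ :=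
  ∑ t, ((f (ω t).1 - g (ω t).1) * ((ω t).2 - g (ω t).1) - (f (ω t).1 - g (ω t).1) ^ 2 / 2)

lemma histLLR_snoc (f g : P → ℝ) (h : Fin n → P × ℝ) (a : P) (r : ℝ) :
    histLLR f g (Fin.snoc h (a, r) : Fin (n + 1) → P × ℝ)
      = histLLR f g h + ((f a - g a) * (r - g a) - (f a - g a) ^ 2 / 2) := by
  simp only [histLLR, Fin.sum_univ_castSucc, Fin.snoc_castSucc, Fin.snoc_last]

lemma histLLR_add_histLLR_reflect (f g : P → ℝ) (ω : Fin n → P × ℝ) :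
    histLLR f g ω + histLLR (fun a => 2 * g a - f a) g ω
      = -∑ t, (f (ω t).1 - g (ω t).1) ^ 2 := by
  rw [histLLR, histLLR, ← Finset.sum_add_distrib, ← Finset.sum_neg_distrib]
  exact Finset.sum_congr rfl fun t _ => by ring

variable [MeasurableSpace P] {f g : P → ℝ}

lemma measurable_histLLR (hf : Measurable f) (hg : Measurable g) :
    Measurable (histLLR f g : (Fin n → P × ℝ) → ℝ) := by
  unfold histLLR
  fun_prop

theorem trajMeasure_eq_withDensity (hf : Measurable f) (hg : Measurable g)
    (alg : (t : ℕ) → Kernel (Fin t → P × ℝ) P) [∀ t, IsSFiniteKernel (alg t)] (n : ℕ) :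
    trajMeasure f alg n = (trajMeasure g alg n).withDensity fun ω =>
      ENNReal.ofReal (Real.exp (histLLR f g ω)) := by
  have hL (n : ℕ) : Measurable fun ω : Fin n → P × ℝ => ENNReal.ofReal (Real.exp (histLLR f g ω)) :=
    (measurable_histLLR hf hg).exp.ennreal_ofReal
  induction n with
  | zero => simp [trajMeasure, histLLR]
  | succ n ih =>
    refine Measure.ext_of_lintegral _ fun F hF => ?_
    have hF_round : Measurable fun h =>
        ∫⁻ a, ∫⁻ r, F (Fin.snoc h (a, r)) ∂gaussianReal (f a) 1 ∂alg n h := by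
      simpa only [← lintegral_roundKernel hf (alg n) _ hF] using hF.lintegral_kernel
    rw [lintegral_withDensity_eq_lintegral_mul _ (hL _) hF, lintegral_trajMeasure_succ alg hf n hF,
      lintegral_trajMeasure_succ alg hg n ((hL _).mul hF), ih,
      lintegral_withDensity_eq_lintegral_mul _ (hL _) hF_round]
    refine lintegral_congr fun h => ?_
    rw [Pi.mul_apply, ← lintegral_const_mul' _ _ ENNReal.ofReal_ne_top]
    refine lintegral_congr fun a => ?_
    have hFr : Measurable fun r : ℝ => F (Fin.snoc h (a, r)) :=
      hF.comp (measurable_snoc.comp (measurable_prodMk_left.comp measurable_prodMk_left))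
    rw [gaussianReal_eq_withDensity (f a) (g a) one_ne_zero,
      lintegral_withDensity_eq_lintegral_mul _ (by fun_prop) hFr,
      ← lintegral_const_mul' _ _ ENNReal.ofReal_ne_top]
    refine lintegral_congr fun r => ?_
    rw [Pi.mul_apply, Pi.mul_apply, histLLR_snoc, Real.exp_add,
      ENNReal.ofReal_mul (Real.exp_nonneg _), NNReal.coe_one, div_one, mul_assoc]

lemma one_le_exp_add_exp_div_four_mul_exp {c x y : ℝ} (hxy : -c ≤ x + y) :
    1 ≤ Real.exp x + Real.exp c / 4 * Real.exp y := by
  have hprod : 1 ≤ Real.exp c * Real.exp x * Real.exp y := by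
    rw [← Real.exp_add, ← Real.exp_add]
    exact Real.one_le_exp (by linarith)
  have hy : 0 ≤ Real.exp c / 4 * Real.exp y := by positivity
  nlinarith [Real.exp_pos x, sq_nonneg (Real.exp x - Real.exp c / 4 * Real.exp y)]

theorem measure_le_withDensity_add_withDensity {Ω : Type*} [MeasurableSpace Ω] (ν : Measure Ω)
    {L L' : Ω → ℝ} (hL : Measurable L) {c : ℝ} {A : Set Ω} (hA : MeasurableSet A)
    (hc : ∀ ω ∈ A, -c ≤ L ω + L' ω) :
    ν A ≤ ν.withDensity (fun ω => ENNReal.ofReal (Real.exp (L ω))) A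
      + ENNReal.ofReal (Real.exp c / 4)
        * ν.withDensity (fun ω => ENNReal.ofReal (Real.exp (L' ω))) A := by
  rw [withDensity_apply _ hA, withDensity_apply _ hA,
    ← lintegral_const_mul' _ _ ENNReal.ofReal_ne_top,
    ← lintegral_add_left hL.exp.ennreal_ofReal, ← setLIntegral_one]
  refine setLIntegral_mono' hA fun ω hω => ?_
  rw [← ENNReal.ofReal_mul (by positivity), ← ENNReal.ofReal_add (by positivity) (by positivity),
    ENNReal.one_le_ofReal]
  exact one_le_exp_add_exp_div_four_mul_exp (hc ω hω)

theorem trajMeasure_real_le_add_exp_div_four (hf : Measurable f) (hg : Measurable g)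
    (alg : (t : ℕ) → Kernel (Fin t → P × ℝ) P) [∀ t, IsMarkovKernel (alg t)]
    {c : ℝ} {A : Set (Fin n → P × ℝ)} (hA : MeasurableSet A)
    (hc : ∀ ω ∈ A, ∑ t, (f (ω t).1 - g (ω t).1) ^ 2 ≤ c) :
    (trajMeasure g alg n).real A ≤ (trajMeasure f alg n).real A + Real.exp c / 4 := by
  have hf' : Measurable fun a => 2 * g a - f a := by fun_prop
  have := isProbabilityMeasure_trajMeasure alg hf n
  have := isProbabilityMeasure_trajMeasure alg hf' n
  have hle : trajMeasure g alg n A ≤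
      trajMeasure f alg n A + ENNReal.ofReal (Real.exp c / 4) := calc
    trajMeasure g alg n A
      ≤ trajMeasure f alg n A
          + ENNReal.ofReal (Real.exp c / 4) * trajMeasure (fun a => 2 * g a - f a) alg n A := by
        rw [trajMeasure_eq_withDensity hf hg, trajMeasure_eq_withDensity hf' hg]
        refine measure_le_withDensity_add_withDensity _ (measurable_histLLR hf hg) hA
          fun ω hω => ?_
        rw [histLLR_add_histLLR_reflect]
        exact neg_le_neg (hc ω hω)
    _ ≤ trajMeasure f alg n A + ENNReal.ofReal (Real.exp c / 4) := by
        gcongr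
        exact mul_le_of_le_one_right' prob_le_one
  have hreal := ENNReal.toReal_mono (by finiteness) hle
  rwa [ENNReal.toReal_add (by finiteness) (by finiteness),
    ENNReal.toReal_ofReal (by positivity)] at hreal

end ChangeOfMeasure

section Visits

variable {P R : Type*} {n : ℕ}

/-- The number of rounds of the history `ω` whose action lies in `s`, as a real number. -/
def visits (s : Set P) (ω : Fin n → P × R) : ℝ :=
  ∑ t, s.indicator 1 (ω t).1

lemma visits_nonneg (s : Set P) (ω : Fin n → P × R) : 0 ≤ visits s ω :=
  Finset.sum_nonneg fun _ _ => Set.indicator_nonneg (fun _ _ => zero_le_one) _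

lemma notMem_of_visits_lt_one {s : Set P} {ω : Fin n → P × R} (h : visits s ω < 1) (t : Fin n) :
    (ω t).1 ∉ s := by
  intro ht
  refine h.not_ge ?_
  calc (1 : ℝ) = s.indicator 1 (ω t).1 := by rw [Set.indicator_of_mem ht, Pi.one_apply]
    _ ≤ visits s ω := Finset.single_le_sum (f := fun t => s.indicator (1 : P → ℝ) (ω t).1)
        (fun _ _ => Set.indicator_nonneg (fun _ _ => zero_le_one) _) (Finset.mem_univ t)

lemma sum_indicator_eq_ncard {ι : Type*} [Fintype ι] (s : ι → Set P) (a : P) :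
    ∑ i, (s i).indicator (1 : P → ℝ) a = {i | a ∈ s i}.ncard := by
  classical
  simp only [Set.indicator_apply, Pi.one_apply, Finset.sum_boole, Set.ncard_eq_toFinset_card',
    Set.toFinset_ofPred]

variable [MeasurableSpace P] [MeasurableSpace R]

lemma measurable_visits {s : Set P} (hs : MeasurableSet s) :
    Measurable (visits s : (Fin n → P × R) → ℝ) :=
  Finset.measurable_sum _ fun t _ =>
    (measurable_one.indicator hs).comp (measurable_fst.comp (measurable_pi_apply t))

lemma integrable_visits (μ : Measure (Fin n → P × R)) [IsFiniteMeasure μ] {s : Set P}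
    (hs : MeasurableSet s) : Integrable (visits s) μ := by
  refine .of_bound (C := n) (measurable_visits hs).aestronglyMeasurable (.of_forall fun ω => ?_)
  rw [Real.norm_of_nonneg (visits_nonneg s ω)]
  calc visits s ω ≤ ∑ _t : Fin n, (1 : ℝ) :=
        Finset.sum_le_sum fun t _ => Set.indicator_le_self' (fun _ _ => zero_le_one) _
    _ = n := by simp

variable {ι : Type*} [Fintype ι] [Nonempty ι]

theorem exists_integral_visits_le (μ : Measure (Fin n → P × R)) [IsProbabilityMeasure μ]
    {s : ι → Set P} (hs : ∀ i, MeasurableSet (s i)) {c : ℝ}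
    (hc : ∀ a, ({i | a ∈ s i}.ncard : ℝ) ≤ c * Fintype.card ι) :
    ∃ i, ∫ ω, visits (s i) ω ∂μ ≤ n * c := by
  have hpoint (ω : Fin n → P × R) : ∑ i, visits (s i) ω ≤ Fintype.card ι * (n * c) := calc
    ∑ i, visits (s i) ω = ∑ t, ({i | (ω t).1 ∈ s i}.ncard : ℝ) := by
      simp only [visits, ← sum_indicator_eq_ncard]
      exact Finset.sum_comm
    _ ≤ ∑ _t : Fin n, c * Fintype.card ι := Finset.sum_le_sum fun t _ => hc _
    _ = Fintype.card ι * (n * c) := by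
      rw [Finset.sum_const, Finset.card_univ, Fintype.card_fin, nsmul_eq_mul]
      ring
  have hsum : ∑ i, ∫ ω, visits (s i) ω ∂μ ≤ ∑ _i : ι, n * c := calc
    ∑ i, ∫ ω, visits (s i) ω ∂μ = ∫ ω, ∑ i, visits (s i) ω ∂μ :=
      (integral_finsetSum _ fun i _ => integrable_visits μ (hs i)).symm
    _ ≤ ∫ _ω, Fintype.card ι * (n * c) ∂μ :=
      integral_mono (integrable_finsetSum _ fun i _ => integrable_visits μ (hs i))
        (integrable_const _) hpoint
    _ = ∑ _i : ι, n * c := by simp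
  obtain ⟨i, -, hi⟩ := Finset.exists_le_of_sum_le Finset.univ_nonempty hsum
  exact ⟨i, hi⟩

theorem exists_measureReal_le_visits_le (μ : Measure (Fin n → P × R)) [IsProbabilityMeasure μ]
    {s : ι → Set P} (hs : ∀ i, MeasurableSet (s i)) {c : ℝ}
    (hc : ∀ a, ({i | a ∈ s i}.ncard : ℝ) ≤ c * Fintype.card ι) {m : ℝ} (hm : 0 < m) :
    ∃ i, μ.real {ω | m ≤ visits (s i) ω} ≤ n * c / m := by
  obtain ⟨i, hi⟩ := exists_integral_visits_le μ hs hc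
  refine ⟨i, (le_div_iff₀' hm).mpr (le_trans ?_ hi)⟩
  exact mul_meas_ge_le_integral_of_nonneg (.of_forall (visits_nonneg (s i)))
    (integrable_visits μ (hs i)) m

end Visits

section SignVectors

variable {d : ℕ}

lemma ip_self (w : Fin d → Bool) : ip w w = d := by
  have hsgn (b : Bool) : sgn b * sgn b = 1 := by cases b <;> simp [sgn]
  simp [ip, hsgn]

lemma sum_exp_mul_ip (δ : ℝ) (x : Fin d → Bool) :
    ∑ w : Fin d → Bool, Real.exp (δ * ip x w) = (2 * Real.cosh δ) ^ d := by
  have hcoord (b : Bool) : ∑ b', Real.exp (δ * (sgn b * sgn b')) = 2 * Real.cosh δ := by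
    rw [Real.cosh_eq]
    cases b <;> simp [sgn] <;> ring
  simp only [ip, Finset.mul_sum, Real.exp_sum]
  rw [← Fintype.prod_sum fun i b => Real.exp (δ * (sgn (x i) * sgn b))]
  simp only [hcoord, Finset.prod_const, Finset.card_univ, Fintype.card_fin]

theorem ncard_le_ip_le {δ : ℝ} (hδ : 0 ≤ δ) (x : Fin d → Bool) :
    ({w | δ * d ≤ ip x w}.ncard : ℝ)
      ≤ Real.exp (-(δ ^ 2 * d / 2)) * Fintype.card (Fin d → Bool) := calc
  ({w | δ * d ≤ ip x w}.ncard : ℝ)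
    = ∑ w, {y | δ * d ≤ ip y w}.indicator (1 : (Fin d → Bool) → ℝ) x :=
      (sum_indicator_eq_ncard (fun w => {y | δ * d ≤ ip y w}) x).symm
  _ ≤ ∑ w, Real.exp (-(δ * (δ * d))) * Real.exp (δ * ip x w) := by
      refine Finset.sum_le_sum fun w _ => Set.indicator_apply_le' (fun hw => ?_) fun _ => ?_
      · rw [Pi.one_apply, ← Real.exp_add]
        exact Real.one_le_exp (by linarith [mul_le_mul_of_nonneg_left hw.out hδ])
      · positivity
  _ = Real.exp (-(δ * (δ * d))) * (2 * Real.cosh δ) ^ d := by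
      rw [← Finset.mul_sum, sum_exp_mul_ip]
  _ ≤ Real.exp (-(δ * (δ * d))) * (2 * Real.exp (δ ^ 2 / 2)) ^ d := by
      have := (Real.cosh_pos δ).le
      gcongr
      exact Real.cosh_le_exp_half_sq δ
  _ = Real.exp (-(δ ^ 2 * d / 2)) * Fintype.card (Fin d → Bool) := by
      rw [mul_pow, ← Real.exp_nat_mul, mul_left_comm, ← Real.exp_add, Fintype.card_fun,
        Fintype.card_bool, Fintype.card_fin, Nat.cast_pow, Nat.cast_ofNat, mul_comm]
      ring_nf

end SignVectors

section Example

variable {d K T : ℕ}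

instance : DiscreteMeasurableSpace (ExAct d K) := ⟨fun _ => trivial⟩

/-- The amount `√(K/(20T))` by which the values `v_j` of the wrong arms fall short of `v_k = 1`. -/
def gap (K T : ℕ) : ℝ := √((K : ℝ) / (20 * (T : ℝ)))

/-- The actions whose second component is the arm `k`. -/
def armActions (d : ℕ) (k : Fin K) : Set (ExAct d K) := {a | a.2 = k}

/-- The actions whose mean reward reveals something about the sign vector `w`. -/
def revealingActions (K : ℕ) (w : Fin d → Bool) : Set (ExAct d K) := {a | hfun w a.1 ≠ 0}

/-- The histories from which the model `(w, k)` is hard to identify: no action reveals `w`, and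
the arm `k` is played in fewer than `4T/K` rounds, four times its average over all arms. -/
def uninformativeHistories (T : ℕ) (w : Fin d → Bool) (k : Fin K) :
    Set (Fin T → ExAct d K × ℝ) :=
  {ω | visits (revealingActions K w) ω < 1 ∧ visits (armActions d k) ω < 4 * T / K}

lemma measurableSet_uninformativeHistories (w : Fin d → Bool) (k : Fin K) :
    MeasurableSet (uninformativeHistories T w k) :=
  (measurableSet_lt (measurable_visits .of_discrete) measurable_const).inter
    (measurableSet_lt (measurable_visits .of_discrete) measurable_const)

lemma ncard_mem_armActions (a : ExAct d K) : {k | a ∈ armActions d k}.ncard = 1 := by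
  rw [Set.ncard_eq_one]
  exact ⟨a.2, by ext k; exact eq_comm⟩

lemma half_mul_le_ip_of_hfun_ne_zero {w x : Fin d → Bool} (h : hfun w (some x) ≠ 0) :
    1 / 2 * d ≤ ip x w := by
  contrapose! h
  rw [hfun, max_eq_left (by linarith), mul_zero]

lemma ncard_mem_revealingActions_le (a : ExAct d K) :
    ({w | a ∈ revealingActions K w}.ncard : ℝ)
      ≤ Real.exp (-(d / 8)) * Fintype.card (Fin d → Bool) := by
  obtain ⟨_ | x, j⟩ := a
  · simp only [revealingActions, hfun, Set.mem_ofPred_eq, ne_eq, not_true_eq_false,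
      Set.ofPred_false, Set.ncard_empty, Nat.cast_zero]
    positivity
  calc ({w | (some x, j) ∈ revealingActions K w}.ncard : ℝ)
      ≤ {w | 1 / 2 * d ≤ ip x w}.ncard := by
        exact_mod_cast Set.ncard_le_ncard fun w hw => half_mul_le_ip_of_hfun_ne_zero hw
    _ ≤ Real.exp (-((1 / 2) ^ 2 * d / 2)) * Fintype.card (Fin d → Bool) :=
        ncard_le_ip_le (by norm_num) x
    _ = Real.exp (-(d / 8)) * Fintype.card (Fin d → Bool) := by ring_nf

theorem exists_le_measureReal_uninformativeHistories (hK : 0 < K) (hT : 0 < T)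
    (hdT : 10 * (T : ℝ) ≤ Real.exp (d / 8))
    (μ : Measure (Fin T → ExAct d K × ℝ)) [IsProbabilityMeasure μ] :
    ∃ w k, 13 / 20 ≤ μ.real (uninformativeHistories T w k) := by
  have : Nonempty (Fin K) := ⟨⟨0, hK⟩⟩
  obtain ⟨w, hw⟩ := exists_measureReal_le_visits_le μ (s := revealingActions K)
    (fun _ => .of_discrete) ncard_mem_revealingActions_le one_pos
  obtain ⟨k, hk⟩ := exists_measureReal_le_visits_le μ (s := armActions d) (c := 1 / K)
    (fun _ => .of_discrete) (fun a => by
      rw [ncard_mem_armActions, Fintype.card_fin, Nat.cast_one, one_div_mul_cancel (by positivity)])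
    (m := 4 * T / K) (by positivity)
  have hrevealed : T * Real.exp (-(d / 8 : ℝ)) / 1 ≤ 1 / 10 := by
    rw [Real.exp_neg, ← div_eq_mul_inv, div_one, div_le_iff₀ (Real.exp_pos _)]
    linarith
  have hplayed : (T : ℝ) * (1 / K) / (4 * T / K) = 1 / 4 := by field_simp
  have hcompl : (uninformativeHistories T w k)ᶜ =
      {ω | 1 ≤ visits (revealingActions K w) ω} ∪
        {ω | 4 * T / K ≤ visits (armActions d k) ω} := by
    ext ω
    simp only [uninformativeHistories, Set.mem_compl_iff, Set.mem_ofPred_eq, Set.mem_union,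
      not_and_or, not_lt]
  refine ⟨w, k, ?_⟩
  have hunion := measureReal_union_le (μ := μ) {ω | 1 ≤ visits (revealingActions K w) ω}
    {ω | 4 * T / K ≤ visits (armActions d k) ω}
  rw [← hcompl, probReal_compl_eq_one_sub (measurableSet_uninformativeHistories w k)] at hunion
  linarith

lemma fEx_eq_of_notMem_revealingActions (γ : ℝ) {w : Fin d → Bool} (k : Fin K) {a : ExAct d K}
    (ha : a ∉ revealingActions K w) :
    fEx d K T γ w k a = γ * (1 - gap K T) + γ * gap K T * (armActions d k).indicator 1 a := by
  have hw : hfun w a.1 = 0 := not_not.mp ha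
  simp only [fEx, hw, gap, armActions, Set.indicator_apply, Set.mem_ofPred_eq, Pi.one_apply]
  split_ifs <;> ring

lemma sum_sq_fEx_sub_le {γ : ℝ} (hγ : |γ| ≤ 1) (hK : 0 < K) (hT : 0 < T) {w : Fin d → Bool}
    {k : Fin K} {ω : Fin T → ExAct d K × ℝ} (hω : ω ∈ uninformativeHistories T w k) :
    ∑ t, (fEx d K T γ w k (ω t).1 - γ * (1 - gap K T)) ^ 2 ≤ 1 / 5 := calc
  ∑ t, (fEx d K T γ w k (ω t).1 - γ * (1 - gap K T)) ^ 2
    = γ ^ 2 * gap K T ^ 2 * visits (armActions d k) ω := by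
      rw [visits, Finset.mul_sum]
      refine Finset.sum_congr rfl fun t _ => ?_
      have hindicator : (armActions d k).indicator (1 : ExAct d K → ℝ) (ω t).1 ^ 2 =
          (armActions d k).indicator 1 (ω t).1 := by
        rcases Set.indicator_eq_zero_or_self (armActions d k) (1 : ExAct d K → ℝ) (ω t).1 with
          h | h <;> simp [h]
      rw [fEx_eq_of_notMem_revealingActions γ k (notMem_of_visits_lt_one hω.1 t),
        add_sub_cancel_left, mul_pow, mul_pow, hindicator]
  _ ≤ 1 * gap K T ^ 2 * (4 * T / K) := by
      gcongr
      · exact visits_nonneg _ _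
      · exact (sq_le_one_iff_abs_le_one γ).mpr hγ
      · exact hω.2.le
  _ = 1 / 5 := by
      rw [gap, Real.sq_sqrt (by positivity)]
      field_simp
      norm_num

lemma one_le_iSup_fEx (hd : 0 < d) (γ : ℝ) (w : Fin d → Bool) (k : Fin K) :
    1 ≤ ⨆ a, fEx d K T γ w k a := by
  have hmax : max 0 ((d : ℝ) - d / 2) = d / 2 := by
    rw [sub_half, max_eq_right (by positivity)]
  refine le_ciSup_of_le (Set.finite_range _).bddAbove (some w, k) (le_of_eq ?_)
  simp only [fEx, hfun, ip_self, hmax, if_true]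
  field_simp
  ring

lemma sqrt_mul_le_five_mul_gap_mul (hT : 0 < T) : √((K : ℝ) * T) ≤ 5 * (gap K T * T) := by
  refine Real.sqrt_le_iff.mpr ⟨by unfold gap; positivity, ?_⟩
  have hsq : (5 * (gap K T * T)) ^ 2 = 5 / 4 * (K * T) := by
    rw [mul_pow, mul_pow, gap, Real.sq_sqrt (by positivity)]
    field_simp
    ring
  rw [hsq]
  exact le_mul_of_one_le_left (by positivity) (by norm_num)

lemma sum_sub_fEx_eq (γ : ℝ) {w : Fin d → Bool} (k : Fin K) {ω : Fin T → ExAct d K × ℝ}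
    (hω : ∀ t, (ω t).1 ∉ revealingActions K w) :
    ∑ t, (γ - fEx d K T γ w k (ω t).1) = γ * gap K T * (T - visits (armActions d k) ω) := by
  simp only [fEx_eq_of_notMem_revealingActions γ k (hω _), Finset.sum_sub_distrib,
    Finset.sum_add_distrib, ← Finset.mul_sum, Finset.sum_const, Finset.card_univ,
    Fintype.card_fin, nsmul_eq_mul, visits]
  ring

lemma le_regret_of_mem_uninformativeHistories {γ : ℝ} (hγ : 0 ≤ γ) (hd : 0 < d) (hK : 8 ≤ K)
    (hT : 0 < T) {w : Fin d → Bool} {k : Fin K} {ω : Fin T → ExAct d K × ℝ}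
    (hω : ω ∈ uninformativeHistories T w k) :
    γ / 10 * √((K : ℝ) * T) ≤
      ∑ t, (γ * (⨆ a, fEx d K T γ w k a) - fEx d K T γ w k (ω t).1) := by
  have hvisits : visits (armActions d k) ω ≤ T / 2 := by
    refine hω.2.le.trans ((div_le_div_iff₀ (by positivity) two_pos).mpr ?_)
    have hK' : (8 : ℝ) ≤ K := by exact_mod_cast hK
    nlinarith [Nat.cast_pos (α := ℝ).mpr hT]
  have hgap : 0 ≤ gap K T := Real.sqrt_nonneg _
  calc γ / 10 * √((K : ℝ) * T)
      ≤ γ / 10 * (5 * (gap K T * T)) := by gcongr; exact sqrt_mul_le_five_mul_gap_mul hT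
    _ = γ * gap K T * (T - T / 2) := by ring
    _ ≤ γ * gap K T * (T - visits (armActions d k) ω) := by gcongr
    _ = ∑ t, (γ - fEx d K T γ w k (ω t).1) :=
        (sum_sub_fEx_eq γ k (notMem_of_visits_lt_one hω.1)).symm
    _ ≤ ∑ t, (γ * (⨆ a, fEx d K T γ w k a) - fEx d K T γ w k (ω t).1) := by
        gcongr
        exact le_mul_of_one_le_right hγ (one_le_iSup_fEx hd γ w k)

end Example

theorem example_regret_lower_bound_general (d K T : ℕ) {γ : ℝ} (hγ0 : 0 ≤ γ) (hγ1 : γ ≤ 1)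
    (hdT : 10 * (T : ℝ) ≤ Real.exp (d / 8)) (hK : 8 ≤ K) (hT : 0 < T)
    (alg : (t : ℕ) → Kernel (Fin t → ExAct d K × ℝ) (ExAct d K)) [∀ t, IsMarkovKernel (alg t)] :
    ∃ (w : Fin d → Bool) (k : Fin K),
      trajMeasure (fEx d K T γ w k) alg T
          {ω | γ / 10 * √((K : ℝ) * T) ≤
                ∑ t : Fin T, (γ * (⨆ a, fEx d K T γ w k a) - fEx d K T γ w k (ω t).1)} ≥
        1 / 3 := by
  have hd : 0 < d := by
    by_contra! hd
    have hT' : (1 : ℝ) ≤ T := by exact_mod_cast hT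
    rw [Nat.le_zero.mp hd, Nat.cast_zero, zero_div, Real.exp_zero] at hdT
    linarith
  let g : ExAct d K → ℝ := fun _ => γ * (1 - gap K T)
  have := isProbabilityMeasure_trajMeasure alg (f := g) measurable_const T
  obtain ⟨w, k, hreference⟩ := exists_le_measureReal_uninformativeHistories
    (by omega) hT hdT (trajMeasure g alg T)
  have htransfer := trajMeasure_real_le_add_exp_div_four (f := fEx d K T γ w k) .of_discrete
    measurable_const alg (measurableSet_uninformativeHistories w k)
    fun ω hω => sum_sq_fEx_sub_le (abs_le.mpr ⟨by linarith, hγ1⟩) (by omega) hT hω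
  have hexp : Real.exp (1 / 5) ≤ 1 / (1 - 1 / 5) :=
    Real.exp_bound_div_one_sub_of_interval (by norm_num) (by norm_num)
  have hthird : 1 / 3 ≤ (trajMeasure (fEx d K T γ w k) alg T).real
      (uninformativeHistories T w k) := by linarith
  refine ⟨w, k, ?_⟩
  calc (1 / 3 : ℝ≥0∞) = ENNReal.ofReal (1 / 3) := by
        rw [ENNReal.ofReal_div_of_pos three_pos, ENNReal.ofReal_one, ENNReal.ofReal_ofNat]
    _ ≤ trajMeasure (fEx d K T γ w k) alg T (uninformativeHistories T w k) :=
        ENNReal.ofReal_le_of_le_toReal hthird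
    _ ≤ _ := measure_mono fun ω hω =>
        le_regret_of_mem_uninformativeHistories hγ0 hd hK hT hω

/-- **Proposition 2, second part (regret lower bound for Example 1).** For any
algorithm there is a model `(w,k) ∈ M̃` under which, with probability at least `1/3`,
the γ-regret over `T` rounds is at least `(γ/10)√(KT)`. -/
theorem example_regret_lower_bound (d K T : ℕ) (γ : ℝ) (hγ : γ ∈ Set.Ioc (0:ℝ) 1)
    (hdT : 180 * (T:ℝ) ≤ Real.exp ((d:ℝ) / 8))
    (hKT : (K:ℝ) ≤ 20 * (T:ℝ))
    (hKγ : 6000 / γ^2 ≤ (K:ℝ))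
    (hT : 144 ≤ T)
    (alg : (t : ℕ) → Kernel (Fin t → ExAct d K × ℝ) (ExAct d K))
    (halg : ∀ t, IsMarkovKernel (alg t)) :
    ∃ (w : Fin d → Bool) (k : Fin K),
      trajMeasure (fEx d K T γ w k) alg T
          {ω | (γ/10) * Real.sqrt ((K:ℝ) * T) ≤
                ∑ t : Fin T,
                  (γ * (⨆ a, fEx d K T γ w k a) - fEx d K T γ w k (ω t).1)} ≥
        1 / 3 := by
  obtain ⟨hγ0, hγ1⟩ := hγ
  have hK : (8 : ℝ) ≤ K := by
    linarith [le_div_self (by norm_num : (0 : ℝ) ≤ 6000) (by positivity : 0 < γ ^ 2)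
      (pow_le_one₀ hγ0.le hγ1)]
  exact example_regret_lower_bound_general d K T hγ0.le hγ1 (by linarith [T.cast_nonneg (α := ℝ)])
    (by exact_mod_cast hK) (by omega) alg

end
end

section
/- Squared-error bound for the hardest model in the Example. Fix integers d, K ≥ 1, T ≥ 1 with K ≤ 20T, and γ ∈ (0,1]. Let p be any probability distribution on Π. Let w̃ ∈ {−1,1}^d minimize E_{(π',π)∼p}[1(⟨w,π'⟩ ≥ d/2)] over w ∈ {−1,1}^d, and let k̃ ∈ {1,…,K} minimize E_{(π',π)∼p}[1(π = k)] over k. Then E_{(π',π)∼p}[1(⟨w̃,π'⟩ ≥ d/2)] ≤ exp(−d/8), E_{(π',π)∼p}[1(π = k̃)] ≤ 1/K, and E_{(π',π)∼p}[(f_{w̃,k̃}(π',π) − f̂(π',π))²] ≤ 2·exp(−d/8) + 1/(10T). -/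
open MeasureTheory

noncomputable section

/-- The constant reference mean `f̂ = γ(1 − √(K/(20T)))`. -/
def fhat (d K T : ℕ) (γ : ℝ) : ExAct d K → ℝ :=
  fun _ => γ * (1 - Real.sqrt ((K:ℝ) / (20 * (T:ℝ))))

/-- Indicator of the event `⟨w,π'⟩ ≥ d/2` (interpreted as `0` when `π' = ⊥`). -/
def indW (d K : ℕ) (w : Fin d → Bool) : ExAct d K → ℝ :=
  fun a => match a.1 with
  | none => 0
  | some x => if (d:ℝ)/2 ≤ ip w x then 1 else 0

/-- Indicator of the event `π = k`. -/
def indK (d K : ℕ) (k : Fin K) : ExAct d K → ℝ :=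
  fun a => if a.2 = k then 1 else 0

/-!
A minimum is at most an average. For a fixed action, Hoeffding's inequality for Rademacher sums says
that at most `2^d · exp(−d/8)` sign vectors `w` have `⟨w,π'⟩ ≥ d/2`, and exactly one `k` equals `π`;
averaging over `w` and over `k` gives the first two bounds. The error `f_{w,k} − f̂` is the convex
combination of `h_w(π')` and `√(K/(20T)) · 1(π = k)` with weights `1 − γ` and `γ`, so convexity of
the square together with `0 ≤ h_w(π') ≤ 1(⟨w,π'⟩ ≥ d/2)` gives the third bound.
-/

section Rademacher

variable {ι : Type*} [Fintype ι] [DecidableEq ι]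

lemma sum_exp_sum_sgn_mul (c : ι → ℝ) :
    ∑ w : ι → Bool, Real.exp (∑ i, sgn (w i) * c i) = ∏ i, (2 * Real.cosh (c i)) := by
  have sum_exp_sgn (i : ι) : ∑ b : Bool, Real.exp (sgn b * c i) = 2 * Real.cosh (c i) := by
    simp [sgn, Real.cosh_eq, mul_div_cancel₀]
  simp_rw [Real.exp_sum, ← sum_exp_sgn]
  exact (Fintype.prod_sum fun i b => Real.exp (sgn b * c i)).symm

lemma sum_exp_sum_sgn_mul_le (c : ι → ℝ) :
    ∑ w : ι → Bool, Real.exp (∑ i, sgn (w i) * c i) ≤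
      2 ^ Fintype.card ι * Real.exp ((∑ i, c i ^ 2) / 2) := by
  calc ∑ w : ι → Bool, Real.exp (∑ i, sgn (w i) * c i)
      = ∏ i, (2 * Real.cosh (c i)) := sum_exp_sum_sgn_mul c
    _ ≤ ∏ i, (2 * Real.exp (c i ^ 2 / 2)) := by
        gcongr with i
        exact Real.cosh_le_exp_half_sq (c i)
    _ = 2 ^ Fintype.card ι * Real.exp ((∑ i, c i ^ 2) / 2) := by
        rw [Finset.prod_mul_distrib, ← Real.exp_sum, Finset.sum_div, Finset.prod_const,
          Finset.card_univ]

lemma card_le_sum_sgn_mul_le_chernoff (c : ι → ℝ) (s : ℝ) {t : ℝ} (ht : 0 ≤ t) :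
    (Finset.card {w : ι → Bool | s ≤ ∑ i, sgn (w i) * c i} : ℝ) ≤
      2 ^ Fintype.card ι * Real.exp (t ^ 2 * (∑ i, c i ^ 2) / 2 - t * s) := by
  calc (Finset.card {w : ι → Bool | s ≤ ∑ i, sgn (w i) * c i} : ℝ)
      = ∑ w : ι → Bool, if s ≤ ∑ i, sgn (w i) * c i then 1 else 0 := (Finset.sum_boole _ _).symm
    _ ≤ ∑ w : ι → Bool, Real.exp (∑ i, sgn (w i) * (t * c i)) * Real.exp (-(t * s)) := by
        gcongr with w
        have scaled : ∑ i, sgn (w i) * (t * c i) = t * ∑ i, sgn (w i) * c i := by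
          simp only [Finset.mul_sum, mul_left_comm]
        rw [← Real.exp_add, scaled]
        split_ifs with h
        · exact Real.one_le_exp (by linarith [mul_le_mul_of_nonneg_left h ht])
        · positivity
    _ ≤ 2 ^ Fintype.card ι * Real.exp ((∑ i, (t * c i) ^ 2) / 2) * Real.exp (-(t * s)) := by
        rw [← Finset.sum_mul]
        gcongr
        exact sum_exp_sum_sgn_mul_le _
    _ = 2 ^ Fintype.card ι * Real.exp (t ^ 2 * (∑ i, c i ^ 2) / 2 - t * s) := by
        simp only [mul_assoc, mul_pow, ← Finset.mul_sum, ← Real.exp_add, sub_eq_add_neg]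

/-- For `c = 0` the exponent is `s² / 0 = 0` and the bound is trivial. -/
lemma card_le_sum_sgn_mul_le_hoeffding (c : ι → ℝ) {s : ℝ} (hs : 0 ≤ s) :
    (Finset.card {w : ι → Bool | s ≤ ∑ i, sgn (w i) * c i} : ℝ) ≤
      2 ^ Fintype.card ι * Real.exp (-(s ^ 2 / (2 * ∑ i, c i ^ 2))) := by
  -- `t = s / ∑ c_i²` minimizes the Chernoff exponent.
  convert card_le_sum_sgn_mul_le_chernoff c s (t := s / ∑ i, c i ^ 2) (by positivity) using 3
  rcases eq_or_ne (∑ i, c i ^ 2) 0 with h | h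
  · simp [h]
  · field_simp
    ring

end Rademacher

lemma integral_le_of_forall_integral_le_of_sum_le {ι α : Type*} [Fintype ι] [MeasurableSpace α]
    {μ : Measure α} [IsProbabilityMeasure μ] {f : ι → α → ℝ} {i₀ : ι} {C : ℝ}
    (hf : ∀ i, Integrable (f i) μ) (hmin : ∀ i, ∫ a, f i₀ a ∂μ ≤ ∫ a, f i a ∂μ)
    (hsum : ∀ᵐ a ∂μ, ∑ i, f i a ≤ Fintype.card ι * C) : ∫ a, f i₀ a ∂μ ≤ C := by
  have : Nonempty ι := ⟨i₀⟩
  refine le_of_mul_le_mul_left ?_ (Nat.cast_pos.mpr (Fintype.card_pos (α := ι)))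
  calc Fintype.card ι * ∫ a, f i₀ a ∂μ
      ≤ ∑ i, ∫ a, f i a ∂μ := by
        simpa using Finset.card_nsmul_le_sum Finset.univ _ _ fun i _ => hmin i
    _ = ∫ a, ∑ i, f i a ∂μ := (integral_finsetSum _ fun i _ => hf i).symm
    _ ≤ ∫ _, Fintype.card ι * C ∂μ :=
        integral_mono_ae (integrable_finsetSum _ fun i _ => hf i) (integrable_const _) hsum
    _ = Fintype.card ι * C := by simp

instance (d K : ℕ) : DiscreteMeasurableSpace (ExAct d K) where
  forall_measurableSet _ := trivial

section Model

variable {d K : ℕ}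

lemma sgn_sq (b : Bool) : sgn b ^ 2 = 1 := by
  cases b <;> simp [sgn]

lemma ip_comm (w x : Fin d → Bool) : ip w x = ip x w := by
  simp only [ip, mul_comm]

lemma ip_le (w x : Fin d → Bool) : ip w x ≤ d := by
  calc ip w x ≤ ∑ _i : Fin d, (1 : ℝ) := by
        unfold ip
        gcongr with i
        linarith [two_mul_le_add_sq (sgn (w i)) (sgn (x i)), sgn_sq (w i), sgn_sq (x i)]
    _ = d := by simp

lemma card_half_le_ip_le (x : Fin d → Bool) :
    (Finset.card {w : Fin d → Bool | (d : ℝ) / 2 ≤ ip w x} : ℝ) ≤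
      2 ^ d * Real.exp (-(d : ℝ) / 8) := by
  have hoeffding : (Finset.card {w : Fin d → Bool | (d : ℝ) / 2 ≤ ip w x} : ℝ) ≤ _ :=
    card_le_sum_sgn_mul_le_hoeffding (fun i => sgn (x i)) (by positivity)
  have exponent_eq : -(((d : ℝ) / 2) ^ 2 / (2 * d)) = -(d : ℝ) / 8 := by
    field_simp
    norm_num
  simpa [sgn_sq, exponent_eq] using hoeffding

lemma sum_indW_le (a : ExAct d K) :
    ∑ w : Fin d → Bool, indW d K w a ≤ 2 ^ d * Real.exp (-(d : ℝ) / 8) := by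
  obtain ⟨_ | x, k⟩ := a
  · simp only [indW, Finset.sum_const_zero]
    positivity
  · simpa only [indW, Finset.sum_boole] using card_half_le_ip_le x

lemma sum_indK (a : ExAct d K) : ∑ k, indK d K k a = 1 := by
  simp [indK]

lemma indW_sq (w : Fin d → Bool) (a : ExAct d K) : indW d K w a ^ 2 = indW d K w a := by
  obtain ⟨_ | x, k⟩ := a <;> simp [indW]

lemma indK_sq (k : Fin K) (a : ExAct d K) : indK d K k a ^ 2 = indK d K k a := by
  simp [indK]

lemma hfun_nonneg (w : Fin d → Bool) (x : Option (Fin d → Bool)) : 0 ≤ hfun w x := by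
  cases x <;> simp only [hfun] <;> positivity

lemma hfun_le_indW (hd : 1 ≤ d) (w : Fin d → Bool) (a : ExAct d K) :
    hfun w a.1 ≤ indW d K w a := by
  obtain ⟨_ | x, k⟩ := a
  · rfl
  have hd_pos : (0 : ℝ) < d := by exact_mod_cast hd
  simp only [hfun, indW, ip_comm w x]
  split_ifs with h
  · rw [max_eq_right (by linarith), div_mul_eq_mul_div, div_le_one hd_pos]
    linarith [ip_le x w]
  · rw [max_eq_left (by linarith), mul_zero]

lemma fEx_sub_fhat (T : ℕ) (γ : ℝ) (w : Fin d → Bool) (k : Fin K) (a : ExAct d K) :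
    fEx d K T γ w k a - fhat d K T γ a =
      (1 - γ) * hfun w a.1 + γ * (√((K : ℝ) / (20 * T)) * indK d K k a) := by
  simp only [fEx, fhat, indK]
  split_ifs <;> ring

lemma sq_fEx_sub_fhat_le (hd : 1 ≤ d) (T : ℕ) {γ : ℝ} (hγ : γ ∈ Set.Icc (0 : ℝ) 1)
    (w : Fin d → Bool) (k : Fin K) (a : ExAct d K) :
    (fEx d K T γ w k a - fhat d K T γ a) ^ 2 ≤
      (1 - γ) * indW d K w a + γ * (K / (20 * T) * indK d K k a) := by
  have hγ' : 0 ≤ 1 - γ := sub_nonneg.mpr hγ.2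
  have sq_hfun_le : hfun w a.1 ^ 2 ≤ indW d K w a :=
    indW_sq w a ▸ pow_le_pow_left₀ (hfun_nonneg w a.1) (hfun_le_indW hd w a) 2
  calc (fEx d K T γ w k a - fhat d K T γ a) ^ 2
      = ((1 - γ) * hfun w a.1 + γ * (√((K : ℝ) / (20 * T)) * indK d K k a)) ^ 2 := by
        rw [fEx_sub_fhat]
    _ ≤ (1 - γ) * hfun w a.1 ^ 2 + γ * (√((K : ℝ) / (20 * T)) * indK d K k a) ^ 2 :=
        even_two.convexOn_pow.2 trivial trivial hγ' hγ.1 (sub_add_cancel 1 γ)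
    _ = (1 - γ) * hfun w a.1 ^ 2 + γ * (K / (20 * T) * indK d K k a) := by
        rw [mul_pow, Real.sq_sqrt (by positivity), indK_sq]
    _ ≤ (1 - γ) * indW d K w a + γ * (K / (20 * T) * indK d K k a) := by gcongr

variable {p : Measure (ExAct d K)} [IsProbabilityMeasure p]

lemma integral_indW_le_of_forall_le {w₀ : Fin d → Bool}
    (hw₀ : ∀ w, ∫ a, indW d K w₀ a ∂p ≤ ∫ a, indW d K w a ∂p) :
    ∫ a, indW d K w₀ a ∂p ≤ Real.exp (-(d : ℝ) / 8) :=
  integral_le_of_forall_integral_le_of_sum_le (fun _ => .of_finite) hw₀ <|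
    .of_forall fun a => by simpa using sum_indW_le a

lemma integral_indK_le_of_forall_le {k₀ : Fin K}
    (hk₀ : ∀ k, ∫ a, indK d K k₀ a ∂p ≤ ∫ a, indK d K k a ∂p) :
    ∫ a, indK d K k₀ a ∂p ≤ 1 / (K : ℝ) := by
  have hK : (K : ℝ) ≠ 0 := Nat.cast_ne_zero.mpr k₀.pos.ne'
  refine integral_le_of_forall_integral_le_of_sum_le (fun _ => .of_finite) hk₀ <|
    .of_forall fun a => ?_
  rw [sum_indK, Fintype.card_fin, mul_one_div_cancel hK]

lemma integral_sq_fEx_sub_fhat_le (hd : 1 ≤ d) (T : ℕ) {γ : ℝ} (hγ : γ ∈ Set.Icc (0 : ℝ) 1)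
    (w : Fin d → Bool) (k : Fin K) :
    ∫ a, (fEx d K T γ w k a - fhat d K T γ a) ^ 2 ∂p ≤
      (1 - γ) * ∫ a, indW d K w a ∂p + γ * (K / (20 * T) * ∫ a, indK d K k a ∂p) := by
  calc ∫ a, (fEx d K T γ w k a - fhat d K T γ a) ^ 2 ∂p
      ≤ ∫ a, ((1 - γ) * indW d K w a + γ * (K / (20 * T) * indK d K k a)) ∂p :=
        integral_mono .of_finite .of_finite (sq_fEx_sub_fhat_le hd T hγ w k)
    _ = (1 - γ) * ∫ a, indW d K w a ∂p + γ * (K / (20 * T) * ∫ a, indK d K k a ∂p) := by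
        rw [integral_add .of_finite .of_finite]
        simp only [integral_const_mul]

end Model

theorem example_squared_error_bound_general {d K T : ℕ} (hd : 1 ≤ d) (hT : 1 ≤ T)
    {γ : ℝ} (hγ : γ ∈ Set.Icc (0 : ℝ) 1) {p : Measure (ExAct d K)} [IsProbabilityMeasure p]
    {w₀ : Fin d → Bool} (hw₀ : ∀ w, ∫ a, indW d K w₀ a ∂p ≤ ∫ a, indW d K w a ∂p)
    {k₀ : Fin K} (hk₀ : ∀ k, ∫ a, indK d K k₀ a ∂p ≤ ∫ a, indK d K k a ∂p) :
    ∫ a, indW d K w₀ a ∂p ≤ Real.exp (-(d : ℝ) / 8) ∧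
    ∫ a, indK d K k₀ a ∂p ≤ 1 / (K : ℝ) ∧
    ∫ a, (fEx d K T γ w₀ k₀ a - fhat d K T γ a) ^ 2 ∂p ≤
      (1 - γ) * Real.exp (-(d : ℝ) / 8) + γ * (1 / (20 * T)) := by
  have indW_le := integral_indW_le_of_forall_le hw₀
  have indK_le := integral_indK_le_of_forall_le hk₀
  have hγ' : 0 ≤ 1 - γ := sub_nonneg.mpr hγ.2
  have hγ₀ : 0 ≤ γ := hγ.1
  have hK_pos : (0 : ℝ) < K := Nat.cast_pos.mpr k₀.pos
  have gap_le : K / (20 * T) * ∫ a, indK d K k₀ a ∂p ≤ 1 / (20 * T) := by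
    rw [div_mul_eq_mul_div, div_le_div_iff_of_pos_right (by positivity)]
    exact (le_div_iff₀' hK_pos).mp indK_le
  refine ⟨indW_le, indK_le, ?_⟩
  calc ∫ a, (fEx d K T γ w₀ k₀ a - fhat d K T γ a) ^ 2 ∂p
      ≤ (1 - γ) * ∫ a, indW d K w₀ a ∂p + γ * (K / (20 * T) * ∫ a, indK d K k₀ a ∂p) :=
        integral_sq_fEx_sub_fhat_le hd T hγ w₀ k₀
    _ ≤ (1 - γ) * Real.exp (-(d : ℝ) / 8) + γ * (1 / (20 * T)) := by gcongr

/-- **Squared-error bound for the hardest model in the Example.** If `w̃` minimizes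
`E_p[1(⟨w,π'⟩ ≥ d/2)]` and `k̃` minimizes `E_p[1(π = k)]`, then
`E_p[1(⟨w̃,π'⟩ ≥ d/2)] ≤ exp(−d/8)`, `E_p[1(π = k̃)] ≤ 1/K`, and
`E_p[(f_{w̃,k̃} − f̂)²] ≤ 2exp(−d/8) + 1/(10T)`. -/
theorem example_squared_error_bound (d K T : ℕ)
    (hd : 1 ≤ d) (hK : 1 ≤ K) (hT : 1 ≤ T) (hKT : (K:ℝ) ≤ 20 * (T:ℝ))
    (γ : ℝ) (hγ : γ ∈ Set.Ioc (0:ℝ) 1)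
    (p : Measure (ExAct d K)) (hp : IsProbabilityMeasure p)
    (wt : Fin d → Bool)
    (hwt : ∀ w : Fin d → Bool, ∫ a, indW d K wt a ∂p ≤ ∫ a, indW d K w a ∂p)
    (kt : Fin K)
    (hkt : ∀ k : Fin K, ∫ a, indK d K kt a ∂p ≤ ∫ a, indK d K k a ∂p) :
    (∫ a, indW d K wt a ∂p ≤ Real.exp (-(d:ℝ)/8)) ∧
    (∫ a, indK d K kt a ∂p ≤ 1 / (K:ℝ)) ∧
    (∫ a, (fEx d K T γ wt kt a - fhat d K T γ a)^2 ∂p ≤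
      2 * Real.exp (-(d:ℝ)/8) + 1 / (10 * (T:ℝ))) := by
  obtain ⟨indW_le, indK_le, sq_le⟩ :=
    example_squared_error_bound_general hd hT (Set.Ioc_subset_Icc_self hγ) hwt hkt
  refine ⟨indW_le, indK_le, sq_le.trans ?_⟩
  gcongr ?_ * _ + ?_
  · linarith [hγ.1]
  · exact (mul_le_of_le_one_left (by positivity) hγ.2).trans (by gcongr; norm_num)

end
end
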